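/- arXiv:1502.02799 — 2 statements merged into one kernel-verified Lean document; each statement's English description precedes it below -/
import Mathlib

section
/- Let V ⊆ 𝒜 and Σ be a CNF theory. If a partition {Q,H} of Var(ren(Σ,V)) satisfies the QH-conditions for every clause of ren(Σ,V), then {Q,H} satisfies the QH-conditions for every clause of res^n_{ren(Σ,V)} for every n ≥ 0. -/
variable {α : Type*} [Fintype α] [DecidableEq α]

/-- A clause (or term): a finite set of literals, where a literal is an atom
paired with a polarity (`true` = positive occurrence, `false` = negated). -/
abbrev Clause (α : Type*) := Finset (α × Bool)

/-- A finite set of literals is a legal clause/term if it contains no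
complementary pair of literals. -/
def IsClause (c : Clause α) : Prop := ∀ p : α, ¬((p, true) ∈ c ∧ (p, false) ∈ c)

instance : DecidablePred (IsClause (α := α)) := fun c =>
  decidable_of_iff (∀ p : α, ¬((p, true) ∈ c ∧ (p, false) ∈ c)) Iff.rfl

/-- The atoms occurring in a clause/term. -/
def varsC (c : Clause α) : Finset α := c.image Prod.fst

/-- The atoms occurring positively in a clause/term. -/
def posC (c : Clause α) : Finset α := (c.filter fun l => l.2 = true).image Prod.fst

/-- The atoms occurring negatively in a clause/term. -/
def negC (c : Clause α) : Finset α := (c.filter fun l => l.2 = false).image Prod.fst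

/-- The resolvent of two clauses on atom `p`. -/
def res (c c' : Clause α) (p : α) : Clause α :=
  (c ∪ c') \ ({(p, true), (p, false)} : Finset (α × Bool))

/-- `c` and `c'` are resolvable on atom `p`: `p` occurs in one of them and `¬p` in
the other, and the resolvent contains no complementary pair of literals. -/
def ResolvableOn (c c' : Clause α) (p : α) : Prop :=
  ((p, true) ∈ c ∧ (p, false) ∈ c' ∨ (p, false) ∈ c ∧ (p, true) ∈ c') ∧ IsClause (res c c' p)

/-- Renaming of a literal: flip the polarity of atoms in `V`. -/
def renLit (V : Finset α) (l : α × Bool) : α × Bool := if l.1 ∈ V then (l.1, !l.2) else l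

/-- Renaming of a clause w.r.t. the atoms in `V`. -/
def renClause (V : Finset α) (c : Clause α) : Clause α := c.image (renLit V)

/-- Renaming of a CNF theory w.r.t. the atoms in `V`. -/
def renTheory (V : Finset α) (T : Finset (Clause α)) : Finset (Clause α) := T.image (renClause V)

/-- A Horn clause: at most one positive literal. -/
def HornClause (c : Clause α) : Prop := (posC c).card ≤ 1

/-- A Horn theory: a finite set of Horn clauses. -/
def IsHornTheory (T : Finset (Clause α)) : Prop := ∀ c ∈ T, HornClause c

/-- A Krom theory: each clause contains at most 2 literals. -/
def IsKromTheory (T : Finset (Clause α)) : Prop := ∀ c ∈ T, c.card ≤ 2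

/-- `T` is Horn renamable: some renaming of `T` is a Horn theory. -/
def IsRenHorn (T : Finset (Clause α)) : Prop := ∃ V : Finset α, IsHornTheory (renTheory V T)

/-- The QH-conditions for sets of atoms `Q`, `H` and a clause `c`. -/
def QHcond (Q H : Finset α) (c : Clause α) : Prop :=
  (varsC c ∩ Q).card ≤ 2 ∧ (posC c ∩ H).card ≤ 1 ∧
    ((posC c ∩ H).card = 1 → varsC c ∩ Q = ∅)

/-- The atoms occurring in a CNF theory. -/
def varsT (T : Finset (Clause α)) : Finset α := T.sup varsC

/-- `T` has a QH-partition: a partition `{Q, H}` of its atoms satisfying the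
QH-conditions for each of its clauses. -/
def HasQHPartition (T : Finset (Clause α)) : Prop :=
  ∃ Q H : Finset α, Q ∩ H = ∅ ∧ Q ∪ H = varsT T ∧ ∀ c ∈ T, QHcond Q H c

/-- `T` is q-Horn: some renaming of `T` has a QH-partition. -/
def IsQHorn (T : Finset (Clause α)) : Prop := ∃ V : Finset α, HasQHPartition (renTheory V T)

/-- Satisfaction of a literal by an interpretation (a set of atoms). -/
def litSat (I : Set α) (l : α × Bool) : Prop := if l.2 then l.1 ∈ I else l.1 ∉ I

/-- Satisfaction of a clause (read disjunctively). -/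
def clauseSat (I : Set α) (c : Clause α) : Prop := ∃ l ∈ c, litSat I l

/-- Satisfaction of a term (read conjunctively). -/
def termSat (I : Set α) (t : Clause α) : Prop := ∀ l ∈ t, litSat I l

/-- Satisfaction of a CNF theory. -/
def cnfSat (I : Set α) (T : Finset (Clause α)) : Prop := ∀ c ∈ T, clauseSat I c

/-- One step of the resolution closure. -/
def resStep (S : Set (Clause α)) : Set (Clause α) :=
  S ∪ {d | ∃ c ∈ S, ∃ c' ∈ S, ∃ p : α, ResolvableOn c c' p ∧ d = res c c' p}

/-- The iterated resolution closure `res^n_T`. -/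
def resIter (T : Finset (Clause α)) : ℕ → Set (Clause α)
  | 0 => (↑T : Set (Clause α))
  | n + 1 => resStep (resIter T n)

/-- Propositional formulas over atoms `α`. -/
inductive PropForm (α : Type*) where
  | var : α → PropForm α
  | tru : PropForm α
  | fls : PropForm α
  | neg : PropForm α → PropForm α
  | conj : PropForm α → PropForm α → PropForm α
  | disj : PropForm α → PropForm α → PropForm α

namespace PropForm

/-- Satisfaction of a formula by an interpretation. -/
def Sat (I : Set α) : PropForm α → Prop
  | var p => p ∈ I
  | tru => True
  | fls => False
  | neg φ => ¬ Sat I φ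
  | conj φ ψ => Sat I φ ∧ Sat I ψ
  | disj φ ψ => Sat I φ ∨ Sat I ψ

/-- Logical equivalence: same models. -/
def equivalent (φ ψ : PropForm α) : Prop := ∀ I : Set α, Sat I φ ↔ Sat I ψ

/-- Entailment: every model of `φ` is a model of `ψ`. -/
def entails (φ ψ : PropForm α) : Prop := ∀ I : Set α, Sat I φ → Sat I ψ

/-- The atoms occurring in a formula. -/
def vars : PropForm α → Finset α
  | var p => {p}
  | tru => ∅
  | fls => ∅
  | neg φ => vars φ
  | conj φ ψ => vars φ ∪ vars ψ
  | disj φ ψ => vars φ ∪ vars ψ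

/-- Substitution of the formula `χ` for the atom `p`. -/
def subst (p : α) (χ : PropForm α) : PropForm α → PropForm α
  | var q => if q = p then χ else var q
  | tru => tru
  | fls => fls
  | neg φ => neg (subst p χ φ)
  | conj φ ψ => conj (subst p χ φ) (subst p χ ψ)
  | disj φ ψ => disj (subst p χ φ) (subst p χ ψ)

/-- Forgetting a single atom: `Forget(φ, {p}) = φ[p/⊤] ∨ φ[p/⊥]`. -/
def forget1 (φ : PropForm α) (p : α) : PropForm α := disj (subst p tru φ) (subst p fls φ)

/-- Forgetting a set of atoms (presented as a list), one atom at a time: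
`Forget(φ, ∅) = φ` and `Forget(φ, V ∪ {p}) = Forget(Forget(φ, {p}), V)`. -/
def Forget : PropForm α → List α → PropForm α
  | φ, [] => φ
  | φ, p :: V => Forget (forget1 φ p) V

/-- Renaming of a formula: replace each occurrence of an atom `p ∈ V` by `¬p`. -/
def renForm (V : Finset α) : PropForm α → PropForm α
  | var p => if p ∈ V then neg (var p) else var p
  | tru => tru
  | fls => fls
  | neg φ => neg (renForm V φ)
  | conj φ ψ => conj (renForm V φ) (renForm V ψ)
  | disj φ ψ => disj (renForm V φ) (renForm V ψ)

/-- `φ` is irrelevant to the atoms in `V`: it is equivalent to a formula not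
mentioning any atom of `V`. -/
def IR (φ : PropForm α) (V : List α) : Prop :=
  ∃ φ' : PropForm α, equivalent φ φ' ∧ ∀ p ∈ V, p ∉ vars φ'

end PropForm

/-- The formula corresponding to a literal. -/
def litToForm (l : α × Bool) : PropForm α :=
  if l.2 then PropForm.var l.1 else PropForm.neg (PropForm.var l.1)

/-- The disjunction of the literals of a clause. -/
noncomputable def clauseToForm (c : Clause α) : PropForm α :=
  c.toList.foldr (fun l φ => PropForm.disj (litToForm l) φ) PropForm.fls

/-- The conjunction of the clauses of a CNF theory. -/
noncomputable def cnfToForm (T : Finset (Clause α)) : PropForm α :=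
  T.toList.foldr (fun c φ => PropForm.conj (clauseToForm c) φ) PropForm.tru

/-- `φ` is Horn expressible. -/
def HornExpressible (φ : PropForm α) : Prop :=
  ∃ T : Finset (Clause α), (∀ c ∈ T, IsClause c) ∧ IsHornTheory T ∧
    PropForm.equivalent φ (cnfToForm T)

/-- `φ` is Krom expressible. -/
def KromExpressible (φ : PropForm α) : Prop :=
  ∃ T : Finset (Clause α), (∀ c ∈ T, IsClause c) ∧ IsKromTheory T ∧
    PropForm.equivalent φ (cnfToForm T)

/-- `φ` is renamable-Horn expressible. -/
def RenHornExpressible (φ : PropForm α) : Prop :=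
  ∃ T : Finset (Clause α), (∀ c ∈ T, IsClause c) ∧ IsRenHorn T ∧
    PropForm.equivalent φ (cnfToForm T)

/-- `φ` is q-Horn expressible. -/
def QHornExpressible (φ : PropForm α) : Prop :=
  ∃ T : Finset (Clause α), (∀ c ∈ T, IsClause c) ∧ IsQHorn T ∧
    PropForm.equivalent φ (cnfToForm T)

/-- A formula entails a clause. -/
def EntailsClause (φ : PropForm α) (c : Clause α) : Prop :=
  ∀ I : Set α, PropForm.Sat I φ → clauseSat I c

/-- A prime implicate of a formula. -/
def IsPrimeImplicate (φ : PropForm α) (c : Clause α) : Prop :=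
  IsClause c ∧ EntailsClause φ c ∧ ∀ c' ⊂ c, ¬ EntailsClause φ c'

/-- A term entails a formula. -/
def TermEntails (t : Clause α) (φ : PropForm α) : Prop :=
  ∀ I : Set α, termSat I t → PropForm.Sat I φ

/-- A prime implicant of a formula. -/
def IsPrimeImplicant (φ : PropForm α) (t : Clause α) : Prop :=
  IsClause t ∧ TermEntails t φ ∧ ∀ t' ⊂ t, ¬ TermEntails t' φ

/-- A CNF theory entails a clause. -/
def TheoryEntailsClause (T : Finset (Clause α)) (c : Clause α) : Prop :=
  ∀ I : Set α, cnfSat I T → clauseSat I c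

/-- A prime implicate of a CNF theory. -/
def IsPrimeImplicateT (T : Finset (Clause α)) (c : Clause α) : Prop :=
  IsClause c ∧ TheoryEntailsClause T c ∧ ∀ c' ⊂ c, ¬ TheoryEntailsClause T c'

/-- The set of prime implicates of a CNF theory, as a finite theory. -/
noncomputable def PI (T : Finset (Clause α)) : Finset (Clause α) :=
  (Set.toFinite {c : Clause α | IsPrimeImplicateT T c}).toFinset

/-- Strong unfolding of a CNF theory w.r.t. an atom `p`: keep the clauses not
mentioning `p`, and replace the clauses containing the positive literal `p` by all
their resolvents with clauses containing `¬p`; clauses containing `¬p` are removed. -/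
def unfold1 (T : Finset (Clause α)) (p : α) : Finset (Clause α) :=
  T.filter (fun c => (p, true) ∉ c ∧ (p, false) ∉ c) ∪
    ((T ×ˢ T).filter fun cc =>
        (p, true) ∈ cc.1 ∧ (p, false) ∈ cc.2 ∧ IsClause (res cc.1 cc.2 p)).image
      fun cc => res cc.1 cc.2 p

/-- Iterated strong unfolding w.r.t. a set of atoms (presented as a list):
`unfold(T, ∅) = T` and `unfold(T, V ∪ {p}) = unfold(unfold(T, p), V)`. -/
def unfoldList (T : Finset (Clause α)) : List α → Finset (Clause α)
  | [] => T
  | p :: V => unfoldList (unfold1 T p) V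

/-!
Let a clause weigh `1` for each atom of `Q` it mentions, plus `2` for each atom of `H` it contains
positively. The QH-conditions say exactly that this total weight is at most `2`. Resolving on an
atom `p` removes weight at least `2` from the two parents together: either `p ∈ Q`, and each parent
loses `1`, or `p ∈ H`, and the parent containing `p` positively loses `2`. So the resolvent again
has weight at most `2 + 2 - 2 = 2`.
-/

section

open Finset

omit [Fintype α]

theorem mem_varsC {c : Clause α} {a : α} : a ∈ varsC c ↔ (a, true) ∈ c ∨ (a, false) ∈ c := by
  simp [varsC, or_comm]

theorem mem_posC {c : Clause α} {a : α} : a ∈ posC c ↔ (a, true) ∈ c := by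
  simp [posC]

theorem varsC_subset_varsT {T : Finset (Clause α)} {c : Clause α} (hc : c ∈ T) :
    varsC c ⊆ varsT T :=
  le_sup (f := varsC) hc

theorem res_comm (c c' : Clause α) (p : α) : res c c' p = res c' c p := by
  simp only [res, union_comm]

theorem mem_res {c c' : Clause α} {p : α} {l : α × Bool} :
    l ∈ res c c' p ↔ l.1 ≠ p ∧ (l ∈ c ∨ l ∈ c') := by
  obtain ⟨a, b⟩ := l
  cases b <;> simp [res, and_comm]

theorem varsC_res (c c' : Clause α) (p : α) :
    varsC (res c c' p) = (varsC c ∪ varsC c').erase p := by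
  ext a
  simp only [mem_varsC, mem_res, mem_erase, mem_union]
  tauto

theorem posC_res (c c' : Clause α) (p : α) :
    posC (res c c' p) = (posC c ∪ posC c').erase p := by
  ext a
  simp only [mem_posC, mem_res, mem_erase, mem_union]

theorem resIter_induction {T : Finset (Clause α)} {P : Clause α → Prop}
    (base : ∀ c ∈ T, P c)
    (resolve : ∀ c c' p, (p, true) ∈ c → (p, false) ∈ c' → P c → P c' → P (res c c' p)) :
    ∀ n, ∀ c ∈ resIter T n, P c := by
  intro n
  induction n with
  | zero => exact base
  | succ n ih =>
    rintro d (hd | ⟨c, hc, c', hc', p, ⟨⟨hp, hp'⟩ | ⟨hp, hp'⟩, -⟩, rfl⟩)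
    · exact ih d hd
    · exact resolve c c' p hp hp' (ih c hc) (ih c' hc')
    · rw [res_comm]
      exact resolve c' c p hp' hp (ih c' hc') (ih c hc)

theorem card_erase_union_le (s t : Finset α) (a : α) : #((s ∪ t).erase a) ≤ #s + #t :=
  card_erase_le.trans (card_union_le s t)

theorem card_erase_union_add_one_le {s : Finset α} {a : α} (hs : a ∈ s) (t : Finset α) :
    #((s ∪ t).erase a) + 1 ≤ #s + #t :=
  (card_erase_add_one (mem_union_left t hs)).trans_le (card_union_le s t)

theorem card_erase_union_add_two_le {s t : Finset α} {a : α} (hs : a ∈ s) (ht : a ∈ t) :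
    #((s ∪ t).erase a) + 2 ≤ #s + #t := by
  have herase : #((s ∪ t).erase a) + 1 = #(s ∪ t) := card_erase_add_one (mem_union_left t hs)
  have hinter : 0 < #(s ∩ t) := card_pos.2 ⟨a, mem_inter.2 ⟨hs, ht⟩⟩
  have hunion : #(s ∪ t) + #(s ∩ t) = #s + #t := card_union_add_card_inter s t
  lia

/-- The weight of a clause for which the QH-conditions become the single inequality
`qhWeight Q H c ≤ 2`. The usual q-Horn valuation, with values in `{0, 1/2, 1}`, is doubled here so
that weights are natural numbers. -/
def qhWeight (Q H : Finset α) (c : Clause α) : ℕ := #(varsC c ∩ Q) + 2 * #(posC c ∩ H)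

theorem QHcond_iff_qhWeight_le_two {Q H : Finset α} {c : Clause α} :
    QHcond Q H c ↔ qhWeight Q H c ≤ 2 := by
  simp only [QHcond, qhWeight, ← card_eq_zero]
  lia

theorem qhWeight_res (Q H : Finset α) (c c' : Clause α) (p : α) :
    qhWeight Q H (res c c' p) = #((varsC c ∩ Q ∪ varsC c' ∩ Q).erase p) +
      2 * #((posC c ∩ H ∪ posC c' ∩ H).erase p) := by
  simp only [qhWeight, varsC_res, posC_res, erase_inter, union_inter_distrib_right]

theorem qhWeight_res_add_two_le {Q H : Finset α} {c c' : Clause α} {p : α}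
    (hp : (p, true) ∈ c) (hp' : (p, false) ∈ c') (hpQH : p ∈ Q ∪ H) :
    qhWeight Q H (res c c' p) + 2 ≤ qhWeight Q H c + qhWeight Q H c' := by
  rw [qhWeight_res, qhWeight, qhWeight]
  rcases mem_union.1 hpQH with hpQ | hpH
  · have hvars : #((varsC c ∩ Q ∪ varsC c' ∩ Q).erase p) + 2 ≤
        #(varsC c ∩ Q) + #(varsC c' ∩ Q) :=
      card_erase_union_add_two_le (mem_inter.2 ⟨mem_varsC.2 (.inl hp), hpQ⟩)
        (mem_inter.2 ⟨mem_varsC.2 (.inr hp'), hpQ⟩)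
    have hpos := card_erase_union_le (posC c ∩ H) (posC c' ∩ H) p
    lia
  · have hvars := card_erase_union_le (varsC c ∩ Q) (varsC c' ∩ Q) p
    have hpos : #((posC c ∩ H ∪ posC c' ∩ H).erase p) + 1 ≤
        #(posC c ∩ H) + #(posC c' ∩ H) :=
      card_erase_union_add_one_le (mem_inter.2 ⟨mem_posC.2 hp, hpH⟩) (posC c' ∩ H)
    lia

theorem QHcond.res {Q H : Finset α} {c c' : Clause α} {p : α} (h : QHcond Q H c)
    (h' : QHcond Q H c') (hp : (p, true) ∈ c) (hp' : (p, false) ∈ c') (hpQH : p ∈ Q ∪ H) :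
    QHcond Q H (res c c' p) := by
  rw [QHcond_iff_qhWeight_le_two] at h h' ⊢
  have hres := qhWeight_res_add_two_le hp hp' hpQH
  lia

theorem qh_partition_preserved_by_resolution_closure_general
    {T : Finset (Clause α)} {Q H : Finset α} (hcover : varsT T ⊆ Q ∪ H)
    (hQH : ∀ c ∈ T, QHcond Q H c) :
    ∀ n : ℕ, ∀ c ∈ resIter T n, QHcond Q H c := by
  suffices h : ∀ n : ℕ, ∀ c ∈ resIter T n, varsC c ⊆ Q ∪ H ∧ QHcond Q H c from
    fun n c hc => (h n c hc).2
  refine resIter_induction (fun c hc => ⟨(varsC_subset_varsT hc).trans hcover, hQH c hc⟩) ?_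
  rintro c c' p hp hp' ⟨hvars, hc⟩ ⟨hvars', hc'⟩
  refine ⟨?_, hc.res hc' hp hp' (hvars (mem_varsC.2 (.inl hp)))⟩
  rw [varsC_res]
  exact (erase_subset _ _).trans (union_subset hvars hvars')

end

/-- If a partition `{Q,H}` of `Var(ren(Σ,V))` satisfies the
QH-conditions for every clause of `ren(Σ,V)`, then it satisfies the QH-conditions
for every clause of `res^n_{ren(Σ,V)}` for every `n ≥ 0`. -/
theorem qh_partition_preserved_by_resolution_closure
    (S : Finset (Clause α)) (V : Finset α) (Q H : Finset α)
    (hS : ∀ c ∈ S, IsClause c)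
    (hdisj : Q ∩ H = ∅) (hpart : Q ∪ H = varsT (renTheory V S))
    (hQH : ∀ c ∈ renTheory V S, QHcond Q H c) :
    ∀ n : ℕ, ∀ c ∈ resIter (renTheory V S) n, QHcond Q H c :=
  qh_partition_preserved_by_resolution_closure_general hpart.ge hQH
end

section
/- Let Π and Σ be propositional theories and V a set of atoms. Then Σ ≡ Forget(Π, V) if and only if Σ is equivalent to the conjunction of all prime implicates c of Π with Var(c) ∩ V = ∅. -/
variable {α : Type*} [Fintype α] [DecidableEq α]

/-!
A model of `Forget(Π, V)` is an interpretation that becomes a model of `Π` once its values on `V`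
are suitably changed. A clause avoiding `V` does not notice such a change, so every implicate of `Π`
avoiding `V` holds in all models of `Forget(Π, V)`. Conversely, if `I` is not a model of
`Forget(Π, V)`, then no model of `Π` agrees with `I` on `Var(Π) \ V`; this says precisely that the
clause of all literals over `Var(Π) \ V` that are false in `I` is an implicate of `Π`, and a prime
implicate contained in it avoids `V` and is false in `I`.
-/

section Clauses

omit [Fintype α]

omit [DecidableEq α] in
theorem IsClause.mono {c d : Clause α} (hd : IsClause d) (hcd : c ⊆ d) : IsClause c :=
  fun p hp => hd p ⟨hcd hp.1, hcd hp.2⟩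

omit [DecidableEq α] in
theorem clauseSat_mono {I : Set α} {c d : Clause α} (hcd : c ⊆ d) (hc : clauseSat I c) :
    clauseSat I d :=
  let ⟨l, hl, hI⟩ := hc
  ⟨l, hcd hl, hI⟩

theorem varsC_mono {c d : Clause α} (hcd : c ⊆ d) : varsC c ⊆ varsC d :=
  Finset.image_subset_image hcd

omit [DecidableEq α] in
theorem litSat_congr {I J : Set α} {l : α × Bool} (h : l.1 ∈ I ↔ l.1 ∈ J) :
    litSat I l ↔ litSat J l := by
  simp only [litSat, h]

theorem clauseSat_congr {I J : Set α} {c : Clause α} (h : ∀ p ∈ varsC c, (p ∈ I ↔ p ∈ J)) :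
    clauseSat I c ↔ clauseSat J c :=
  exists_congr fun _ => and_congr_right fun hl =>
    litSat_congr (h _ (Finset.mem_image_of_mem Prod.fst hl))

omit [DecidableEq α] in
theorem EntailsClause.exists_isPrimeImplicate_subset {φ : PropForm α} {c : Clause α}
    (hφ : EntailsClause φ c) (hc : IsClause c) : ∃ d ⊆ c, IsPrimeImplicate φ d := by
  obtain ⟨d, hdc, hd⟩ := exists_minimal_le_of_wellFoundedLT (EntailsClause φ) c hφ
  exact ⟨d, hdc, hc.mono hdc, hd.prop, fun _ => hd.not_prop_of_lt⟩

open scoped Classical in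
/-- The clause of all literals over the atoms in `A` that are false in `I`. Read as a
disjunction, it says that an interpretation differs from `I` on `A`. -/
noncomputable def falsifiedClause (I : Set α) (A : Finset α) : Clause α :=
  A.image fun p => (p, decide (p ∉ I))

theorem varsC_falsifiedClause (I : Set α) (A : Finset α) : varsC (falsifiedClause I A) = A := by
  simp [varsC, falsifiedClause, Finset.image_image, Function.comp_def]

theorem isClause_falsifiedClause (I : Set α) (A : Finset α) : IsClause (falsifiedClause I A) := by
  simp +contextual [IsClause, falsifiedClause]

theorem clauseSat_falsifiedClause {I J : Set α} {A : Finset α} :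
    clauseSat J (falsifiedClause I A) ↔ ∃ p ∈ A, ¬(p ∈ J ↔ p ∈ I) := by
  simp only [clauseSat, falsifiedClause, Finset.exists_mem_image, litSat, decide_eq_true_eq]
  grind

end Clauses

namespace PropForm

omit [Fintype α]

theorem sat_congr {I J : Set α} {φ : PropForm α} (h : ∀ p ∈ φ.vars, (p ∈ I ↔ p ∈ J)) :
    Sat I φ ↔ Sat J φ := by
  induction φ <;> grind [vars, Sat]

theorem sat_subst {I : Set α} {p : α} {χ φ : PropForm α} :
    Sat I (subst p χ φ) ↔ Sat {q | if q = p then Sat I χ else q ∈ I} φ := by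
  induction φ with
  | var q => by_cases hq : q = p <;> simp [subst, Sat, hq]
  | _ => simp_all only [subst, Sat]

theorem sat_forget1 {I : Set α} {p : α} {φ : PropForm α} :
    Sat I (forget1 φ p) ↔ ∃ J, Sat J φ ∧ ∀ q, q ≠ p → (q ∈ J ↔ q ∈ I) := by
  simp only [forget1, Sat, sat_subst]
  constructor
  · rintro (h | h) <;> exact ⟨_, h, fun q hq => by simp [hq]⟩
  · rintro ⟨J, hJ, hJI⟩
    refine (em (p ∈ J)).imp (fun hp => ?_) (fun hp => ?_) <;>
    · refine (sat_congr fun q _ => ?_).mp hJ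
      by_cases hq : q = p <;> simp [hq, hp, hJI]

theorem sat_forget {I : Set α} {φ : PropForm α} {V : List α} :
    Sat I (Forget φ V) ↔ ∃ J, Sat J φ ∧ ∀ q ∉ V, (q ∈ J ↔ q ∈ I) := by
  induction V generalizing φ with
  | nil =>
    refine ⟨fun h => ⟨I, h, fun _ _ => Iff.rfl⟩, ?_⟩
    rintro ⟨J, hJ, hJI⟩
    exact (sat_congr fun q _ => hJI q List.not_mem_nil).mp hJ
  | cons p V ih =>
    simp only [Forget, ih, sat_forget1]
    constructor
    · rintro ⟨K, ⟨J, hJ, hJK⟩, hKI⟩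
      exact ⟨J, hJ, fun q hq =>
        (hJK q (List.ne_of_not_mem_cons hq)).trans (hKI q (List.not_mem_of_not_mem_cons hq))⟩
    · rintro ⟨J, hJ, hJI⟩
      refine ⟨Set.ite {p} I J, ⟨J, hJ, fun q hq => by simp [Set.ite, hq]⟩, fun q hq => ?_⟩
      by_cases hqp : q = p
      · simp [Set.ite, hqp]
      · simp [Set.ite, hqp, hJI q (by simp [hqp, hq])]

theorem clauseSat_of_sat_forget {I : Set α} {φ : PropForm α} {V : List α} {c : Clause α}
    (hI : Sat I (Forget φ V)) (hφ : EntailsClause φ c) (hV : ∀ p ∈ V, p ∉ varsC c) :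
    clauseSat I c := by
  obtain ⟨J, hJ, hJI⟩ := sat_forget.mp hI
  exact (clauseSat_congr fun p hp => hJI p fun hpV => hV p hpV hp).mp (hφ J hJ)

theorem entailsClause_falsifiedClause_of_not_sat_forget {I : Set α} {φ : PropForm α} {V : List α}
    (hI : ¬Sat I (Forget φ V)) : EntailsClause φ (falsifiedClause I (φ.vars \ V.toFinset)) := by
  intro J hJ
  contrapose! hI with hJI
  have agree : ∀ p ∈ φ.vars, p ∉ V → (p ∈ J ↔ p ∈ I) := by
    simpa [clauseSat_falsifiedClause] using hJI
  -- `J` may differ from `I` on atoms outside both `Var(φ)` and `V`, so it is itself no witness.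
  refine sat_forget.mpr ⟨Set.ite {p | p ∈ V} J I, (sat_congr fun p hp => ?_).mp hJ, fun p hp => ?_⟩
  · by_cases hpV : p ∈ V <;> simp [Set.ite, hpV, agree p hp]
  · simp [Set.ite, hp]

theorem exists_isPrimeImplicate_of_not_sat_forget {I : Set α} {φ : PropForm α} {V : List α}
    (hI : ¬Sat I (Forget φ V)) :
    ∃ c, IsPrimeImplicate φ c ∧ (∀ p ∈ V, p ∉ varsC c) ∧ ¬clauseSat I c := by
  obtain ⟨c, hc_sub, hc⟩ :=
    (entailsClause_falsifiedClause_of_not_sat_forget hI).exists_isPrimeImplicate_subset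
      (isClause_falsifiedClause _ _)
  refine ⟨c, hc, fun p hpV hpc => ?_, fun hIc => ?_⟩
  · have hp := varsC_mono hc_sub hpc
    rw [varsC_falsifiedClause, Finset.mem_sdiff, List.mem_toFinset] at hp
    exact hp.2 hpV
  · obtain ⟨p, -, hp⟩ := clauseSat_falsifiedClause.mp (clauseSat_mono hc_sub hIc)
    exact hp Iff.rfl

theorem sat_forget_iff_forall_isPrimeImplicate {I : Set α} {φ : PropForm α} {V : List α} :
    Sat I (Forget φ V) ↔
      ∀ c, IsPrimeImplicate φ c → (∀ p ∈ V, p ∉ varsC c) → clauseSat I c := by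
  refine ⟨fun hI c hc hV => clauseSat_of_sat_forget hI hc.2.1 hV, fun h => ?_⟩
  by_contra hI
  obtain ⟨c, hc, hV, hIc⟩ := exists_isPrimeImplicate_of_not_sat_forget hI
  exact hIc (h c hc hV)

end PropForm

theorem equiv_forget_iff_conjunction_of_prime_implicates_general
    {α : Type*} [DecidableEq α] (P S : PropForm α) (V : List α) :
    PropForm.equivalent S (PropForm.Forget P V) ↔
      ∀ I : Set α, PropForm.Sat I S ↔
        ∀ c : Clause α, IsPrimeImplicate P c → (∀ p ∈ V, p ∉ varsC c) →
          clauseSat I c := by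
  simp only [PropForm.equivalent, PropForm.sat_forget_iff_forall_isPrimeImplicate]

/-- `Σ ≡ Forget(Π, V)` iff `Σ` is equivalent to the conjunction of
all prime implicates `c` of `Π` with `Var(c) ∩ V = ∅`. -/
theorem equiv_forget_iff_conjunction_of_prime_implicates
    (P S : PropForm α) (V : List α) :
    PropForm.equivalent S (PropForm.Forget P V) ↔
      ∀ I : Set α, PropForm.Sat I S ↔
        ∀ c : Clause α, IsPrimeImplicate P c → (∀ p ∈ V, p ∉ varsC c) →
          clauseSat I c :=
  equiv_forget_iff_conjunction_of_prime_implicates_general P S V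
end
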